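/- In the Hull–White case γ ≡ 0 (so ψ_r ≡ 1), for all t ≤ v the variance of the compounding variable admits the closed form S_zz(t,v) = ∫_t^v σ(s)² · B(s,v)² ds, where B(s,v) := ∫_s^v φ_r(s,u) du. Equivalently, 2 ∫_t^v ( ∫_t^u φ_r(w,u) ( ∫_t^w φ_r(s,w)² σ(s)² ds ) dw ) du = ∫_t^v σ(s)² ( ∫_s^v φ_r(s,u) du )² ds. -/

import Mathlib

/-!
By the flow property, `φ_r(s,u) = φ_r(t,u) / φ_r(t,s)`. Put `e(u) = ψ_r(t,u) φ_r(t,u)` and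
`g(s) = σ(s)² / φ_r(t,s)²`. The variance becomes `S_zz(t,v) = 2 ∫_t^v e(u) ∫_t^u e(w) ∫_t^w g(s)`,
an integral of `2 g(s) e(w) e(u)` over `s < w < u`. Integrating over `s` last, the symmetry in `w`
and `u` turns it into `∫_t^v g(s) (∫_s^v e)² ds`.
-/

open MeasureTheory Real

/-- Mean reversion factor `φ_r(t,v) = exp(−∫_t^v α)`. -/
noncomputable def phiR (α : ℝ → ℝ) (t v : ℝ) : ℝ := Real.exp (-(∫ u in t..v, α u))

/-- Variance of the short-rate factor `Σ_rr(t,v)`. -/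
noncomputable def Srr (α σ : ℝ → ℝ) (t v : ℝ) : ℝ := ∫ u in t..v, (phiR α u v) ^ 2 * (σ u) ^ 2

/-- Smile dispersion factor `ψ_r(t,v)`. -/
noncomputable def psiR (α σ γ : ℝ → ℝ) (t v : ℝ) : ℝ :=
  Real.exp ((1 / 2) * (γ v) ^ 2 * Srr α σ t v)

/-- Rate–integral covariance `Σ_rz(t,v)`. -/
noncomputable def Srz (α σ γ : ℝ → ℝ) (t v : ℝ) : ℝ :=
  ∫ u in t..v, psiR α σ γ t u * phiR α u v * Srr α σ t u

/-- Variance of the compounding variable `Σ_zz(t,v)`. -/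
noncomputable def Szz (α σ γ : ℝ → ℝ) (t v : ℝ) : ℝ :=
  2 * ∫ u in t..v, psiR α σ γ t u * Srz α σ γ t u

/-- `B*(t,v) = ∫_t^v ψ_r(t,u) φ_r(t,u) du`. -/
noncomputable def Bstar (α σ γ : ℝ → ℝ) (t v : ℝ) : ℝ :=
  ∫ u in t..v, psiR α σ γ t u * phiR α t u

/-- Drift of the compounding variable `μ*(y,t,v)`. -/
noncomputable def muStar (α σ γ : ℝ → ℝ) (y t v : ℝ) : ℝ :=
  Bstar α σ γ t v * (y + Srz α σ γ 0 t) + (1 / 2) * (Bstar α σ γ t v) ^ 2 * Srr α σ 0 t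

/-- One-dimensional Gaussian density with mean `m` and variance `s`. -/
noncomputable def gauss (x m s : ℝ) : ℝ :=
  (Real.sqrt (2 * Real.pi * s))⁻¹ * Real.exp (-(x - m) ^ 2 / (2 * s))

/-- Centered bivariate Gaussian density with covariance `!![srr, srz; srz, szz]` at `(a, b)`. -/
noncomputable def gauss2 (a b srr srz szz : ℝ) : ℝ :=
  (2 * Real.pi * Real.sqrt (srr * szz - srz ^ 2))⁻¹ *
    Real.exp (-(szz * a ^ 2 - 2 * srz * a * b + srr * b ^ 2) / (2 * (srr * szz - srz ^ 2)))

/-- The leading-order (Hull–White) Green's function `G₀`. -/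
noncomputable def G0 (α σ γ : ℝ → ℝ) (y z t η ζ v : ℝ) : ℝ :=
  gauss2 (η - phiR α t v * y) (ζ - z - muStar α σ γ y t v)
    (Srr α σ t v) (Srz α σ γ t v) (Szz α σ γ t v)

open Set

section IteratedIntegral

variable {e f g : ℝ → ℝ} {a b : ℝ}

lemma integral_mul_tail_eq_integral_primitive_mul (hf : IntervalIntegrable f volume a b)
    (hg : IntervalIntegrable g volume a b) :
    ∫ x in a..b, f x * ∫ y in x..b, g y = ∫ y in a..b, (∫ x in a..y, f x) * g y := by
  have deriv_primitive : ∀ᵐ x, x ∈ uIoc a b → deriv (fun y => ∫ x in a..y, f x) x = f x := by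
    filter_upwards [hf.ae_hasDerivAt_integral] with x hx hxab
    exact (hx (uIoc_subset_uIcc hxab) a left_mem_uIcc).deriv
  have deriv_tail : ∀ᵐ x, x ∈ uIoc a b → deriv (fun y => ∫ x in b..y, g x) x = g x := by
    filter_upwards [hg.ae_hasDerivAt_integral] with x hx hxab
    exact (hx (uIoc_subset_uIcc hxab) b right_mem_uIcc).deriv
  have parts := AbsolutelyContinuousOnInterval.integral_mul_deriv_eq_deriv_mul
    (hf.absolutelyContinuousOnInterval_intervalIntegral left_mem_uIcc)
    (hg.absolutelyContinuousOnInterval_intervalIntegral right_mem_uIcc)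
  calc ∫ x in a..b, f x * ∫ y in x..b, g y
      = -∫ x in a..b, deriv (fun y => ∫ x in a..y, f x) x * ∫ y in b..x, g y := by
        rw [← intervalIntegral.integral_neg]
        refine intervalIntegral.integral_congr_ae (deriv_primitive.mono fun x hx hxab => ?_)
        rw [hx hxab, intervalIntegral.integral_symm b x, mul_neg]
    _ = ∫ y in a..b, (∫ x in a..y, f x) * deriv (fun y => ∫ x in b..y, g x) y := by
        -- the primitive vanishes at `a` and the tail at `b`, so there are no boundary terms
        simp [parts]
    _ = ∫ y in a..b, (∫ x in a..y, f x) * g y :=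
        intervalIntegral.integral_congr_ae (deriv_tail.mono fun x hx hxab => by rw [hx hxab])

lemma continuousOn_tail (hf : IntervalIntegrable f volume a b) :
    ContinuousOn (fun x => ∫ y in x..b, f y) (uIcc a b) := by
  simpa only [intervalIntegral.integral_symm b] using
    (intervalIntegral.continuousOn_primitive_interval' hf right_mem_uIcc).fun_neg

lemma sq_integral_eq_two_mul_integral_mul_tail (he : IntervalIntegrable e volume a b) :
    (∫ x in a..b, e x) ^ 2 = 2 * ∫ x in a..b, e x * ∫ y in x..b, e y := by
  have split : ∀ x ∈ uIcc a b,
      (∫ y in a..x, e y) * e x + e x * ∫ y in x..b, e y = e x * ∫ y in a..b, e y := by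
    intro x hx
    rw [← intervalIntegral.integral_add_adjacent_intervals
      (he.mono_set (uIcc_subset_uIcc_left hx)) (he.mono_set (uIcc_subset_uIcc_right hx))]
    ring
  calc (∫ x in a..b, e x) ^ 2
      = ∫ x in a..b, ((∫ y in a..x, e y) * e x + e x * ∫ y in x..b, e y) := by
        rw [intervalIntegral.integral_congr split, intervalIntegral.integral_mul_const, sq]
    _ = (∫ x in a..b, (∫ y in a..x, e y) * e x) + ∫ x in a..b, e x * ∫ y in x..b, e y :=
        intervalIntegral.integral_add
          (he.continuousOn_mul (intervalIntegral.continuousOn_primitive_interval' he left_mem_uIcc))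
          (he.mul_continuousOn (continuousOn_tail he))
    _ = 2 * ∫ x in a..b, e x * ∫ y in x..b, e y := by
        rw [← integral_mul_tail_eq_integral_primitive_mul he he, two_mul]

lemma integral_mul_sq_tail_eq_two_mul_integral (hg : IntervalIntegrable g volume a b)
    (he : IntervalIntegrable e volume a b) :
    ∫ s in a..b, g s * (∫ u in s..b, e u) ^ 2 =
      2 * ∫ u in a..b, e u * ∫ w in a..u, e w * ∫ s in a..w, g s := by
  have he_tail := he.mul_continuousOn (continuousOn_tail he)
  have he_primitive := he.continuousOn_mul
    (intervalIntegral.continuousOn_primitive_interval' hg left_mem_uIcc)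
  calc ∫ s in a..b, g s * (∫ u in s..b, e u) ^ 2
      = 2 * ∫ s in a..b, g s * ∫ w in s..b, e w * ∫ u in w..b, e u := by
        rw [← intervalIntegral.integral_const_mul]
        refine intervalIntegral.integral_congr fun s hs => ?_
        simp only [sq_integral_eq_two_mul_integral_mul_tail
          (he.mono_set (uIcc_subset_uIcc_right hs)), mul_left_comm]
    _ = 2 * ∫ w in a..b, ((∫ s in a..w, g s) * e w) * ∫ u in w..b, e u := by
        simp only [integral_mul_tail_eq_integral_primitive_mul hg he_tail, mul_assoc]
    _ = 2 * ∫ u in a..b, e u * ∫ w in a..u, e w * ∫ s in a..w, g s := by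
        rw [integral_mul_tail_eq_integral_primitive_mul he_primitive he]
        simp only [mul_comm]

end IteratedIntegral

section MeanReversion

variable {α σ γ : ℝ → ℝ} {s t u v : ℝ}

lemma phiR_ne_zero (α : ℝ → ℝ) (t v : ℝ) : phiR α t v ≠ 0 :=
  Real.exp_ne_zero _

lemma phiR_mul_phiR (hts : IntervalIntegrable α volume t s)
    (hsu : IntervalIntegrable α volume s u) : phiR α t s * phiR α s u = phiR α t u := by
  simp only [phiR]
  rw [← Real.exp_add, ← neg_add, intervalIntegral.integral_add_adjacent_intervals hts hsu]

lemma phiR_eq_div (hα : IntervalIntegrable α volume t v) (hs : s ∈ uIcc t v) (hu : u ∈ uIcc t v) :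
    phiR α s u = phiR α t u / phiR α t s := by
  rw [eq_div_iff (phiR_ne_zero α t s), mul_comm]
  exact phiR_mul_phiR (hα.mono_set (uIcc_subset_uIcc_left hs))
    (hα.mono_set (uIcc_subset_uIcc hs hu))

lemma continuousOn_phiR (hα : IntervalIntegrable α volume t v) :
    ContinuousOn (phiR α t) (uIcc t v) :=
  (intervalIntegral.continuousOn_primitive_interval' hα left_mem_uIcc).neg.rexp

lemma Srr_eq_sq_mul_integral (hα : IntervalIntegrable α volume t v) :
    Srr α σ t v = phiR α t v ^ 2 * ∫ s in t..v, σ s ^ 2 / phiR α t s ^ 2 := by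
  rw [Srr, ← intervalIntegral.integral_const_mul]
  refine intervalIntegral.integral_congr fun s hs => ?_
  simp only [phiR_eq_div hα hs right_mem_uIcc]
  ring

lemma Srz_eq_mul_integral (hα : IntervalIntegrable α volume t v) :
    Srz α σ γ t v = phiR α t v * ∫ w in t..v, psiR α σ γ t w * phiR α t w *
      ∫ s in t..w, σ s ^ 2 / phiR α t s ^ 2 := by
  rw [Srz, ← intervalIntegral.integral_const_mul]
  refine intervalIntegral.integral_congr fun w hw => ?_
  have phiR_ne := phiR_ne_zero α t w
  simp only [phiR_eq_div hα hw right_mem_uIcc,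
    Srr_eq_sq_mul_integral (hα.mono_set (uIcc_subset_uIcc_left hw))]
  field_simp

lemma Szz_eq_two_mul_integral (hα : IntervalIntegrable α volume t v) :
    Szz α σ γ t v = 2 * ∫ u in t..v, psiR α σ γ t u * phiR α t u *
      ∫ w in t..u, psiR α σ γ t w * phiR α t w * ∫ s in t..w, σ s ^ 2 / phiR α t s ^ 2 := by
  rw [Szz]
  congr 1
  refine intervalIntegral.integral_congr fun u hu => ?_
  simp only [Srz_eq_mul_integral (hα.mono_set (uIcc_subset_uIcc_left hu)), mul_assoc]

lemma integral_psiR_mul_phiR_eq_div (hα : IntervalIntegrable α volume t v) (hs : s ∈ uIcc t v) :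
    ∫ u in s..v, psiR α σ γ t u * phiR α s u =
      (∫ u in s..v, psiR α σ γ t u * phiR α t u) / phiR α t s := by
  rw [← intervalIntegral.integral_div]
  refine intervalIntegral.integral_congr fun u hu => ?_
  simp only [phiR_eq_div hα hs (uIcc_subset_uIcc_right hs hu), mul_div_assoc]

lemma psiR_zero (α σ : ℝ → ℝ) (t v : ℝ) : psiR α σ (fun _ => 0) t v = 1 := by
  simp [psiR]

end MeanReversion

theorem Szz_closed_form_HW_general {α σ γ : ℝ → ℝ} {t v : ℝ}
    (hα : IntervalIntegrable α volume t v)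
    (hσ : IntervalIntegrable (fun s => σ s ^ 2) volume t v)
    (hψ : IntervalIntegrable (psiR α σ γ t) volume t v) :
    Szz α σ γ t v =
      ∫ s in t..v, σ s ^ 2 * (∫ u in s..v, psiR α σ γ t u * phiR α s u) ^ 2 := by
  have he : IntervalIntegrable (fun u => psiR α σ γ t u * phiR α t u) volume t v :=
    hψ.mul_continuousOn (continuousOn_phiR hα)
  have hg : IntervalIntegrable (fun s => σ s ^ 2 / phiR α t s ^ 2) volume t v := by
    simp only [div_eq_mul_inv]
    exact hσ.mul_continuousOn
      (((continuousOn_phiR hα).pow 2).inv₀ fun s _ => pow_ne_zero 2 (phiR_ne_zero α t s))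
  rw [Szz_eq_two_mul_integral hα, ← integral_mul_sq_tail_eq_two_mul_integral hg he]
  refine intervalIntegral.integral_congr fun s hs => ?_
  simp only [integral_psiR_mul_phiR_eq_div hα hs]
  ring

theorem Szz_closed_form_HW (α σ : ℝ → ℝ)
    (hα : Continuous α) (hσc : Continuous σ)
    (t v : ℝ) (htv : t ≤ v) :
    Szz α σ (fun _ => 0) t v
      = ∫ s in t..v, (σ s) ^ 2 * (∫ u in s..v, phiR α s u) ^ 2 := by
  simpa only [psiR_zero, one_mul] using Szz_closed_form_HW_general (γ := fun _ => 0)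
    (hα.intervalIntegrable t v) ((hσc.pow 2).intervalIntegrable t v)
    (by simp only [funext (psiR_zero α σ t), intervalIntegrable_const])
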